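/- V_∞(2, 8, 2) = 786. -/

import Mathlib

/-!
The ball of radius 2 consists of the words `π : Fin 8 → Fin 4` in which each symbol occurs twice
and each position `i` carries a symbol within distance 2 of `i / 2`. Such words, with prescribed
symbol multiplicities and prescribed symbols allowed at each position, are counted by splitting
off the first letter: `countWords` is this recursion and `card_words` says that it counts
correctly. For the ball, the recursion tree is small enough to be evaluated by the kernel.
-/

open scoped Classical

/-- `π` is a frequency permutation over `{1,…,m}` (represented 0-based as `Fin m`)
of length `n = m*lam`, i.e. each symbol appears exactly `lam` times. -/
def isFreqPerm (m lam : ℕ) (π : Fin (m * lam) → Fin m) : Prop :=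
  ∀ k : Fin m, (Finset.univ.filter (fun i => π i = k)).card = lam

noncomputable def FPset (m lam : ℕ) : Finset (Fin (m * lam) → Fin m) :=
  Finset.univ.filter (isFreqPerm m lam)

/-- Chebyshev distance `max_i |x_i - y_i|`. -/
def cheb {n m : ℕ} (x y : Fin n → Fin m) : ℕ :=
  Finset.univ.sup fun i => Nat.dist (x i).val (y i).val

/-- The identity frequency permutation `e_i = ⌈i/λ⌉` (0-based: `e_i = i / λ`). -/
def ident (m lam : ℕ) : Fin (m * lam) → Fin m := fun i =>
  ⟨i.val / lam, Nat.div_lt_of_lt_mul (lt_of_lt_of_eq i.isLt (Nat.mul_comm m lam))⟩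

/-- Ball of radius `d` centered at `π` inside `S_n^λ` under Chebyshev distance. -/
noncomputable def ball (m lam d : ℕ) (π : Fin (m * lam) → Fin m) :
    Finset (Fin (m * lam) → Fin m) :=
  (FPset m lam).filter fun ρ => cheb ρ π ≤ d

noncomputable def Vinf (m lam d : ℕ) : ℕ := (ball m lam d (ident m lam)).card

/-- The number of words of length `n` over `Fin m` whose `i`-th letter is allowed by `A i` and in
which each symbol `k` occurs exactly `r k` times, computed by recursion on the first letter. -/
def countWords {m : ℕ} : (n : ℕ) → (Fin n → Fin m → Bool) → (Fin m → ℕ) → ℕ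
  | 0, _, r => if ∀ k, r k = 0 then 1 else 0
  | n + 1, A, r => ∑ k : Fin m, if (A 0 k && decide (0 < r k)) = true then
      countWords n (fun i => A i.succ) (fun j => if j = k then r j - 1 else r j) else 0

/-- Prepending `k` to `τ` gives symbol multiplicities `r` exactly when `k` is still available in
`r` and `τ` has the multiplicities left over. -/
lemma card_cons_eq_iff {m n : ℕ} (k : Fin m) (τ : Fin n → Fin m) (r : Fin m → ℕ) :
    (∀ j, (Finset.univ.filter
        (fun i => (Fin.cons k τ : Fin (n + 1) → Fin m) i = j)).card = r j) ↔
      0 < r k ∧ ∀ j, (Finset.univ.filter (fun i => τ i = j)).card =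
        if j = k then r j - 1 else r j := by
  have h (j : Fin m) : (Finset.univ.filter
      (fun i => (Fin.cons k τ : Fin (n + 1) → Fin m) i = j)).card =
      (if k = j then 1 else 0) + (Finset.univ.filter (fun i => τ i = j)).card := by
    simp only [Finset.card_filter, Fin.sum_univ_succ, Fin.cons_zero, Fin.cons_succ]
  simp only [h]
  constructor
  · intro H
    refine ⟨by have := H k; simp at this; omega, fun j => ?_⟩
    have := H j
    by_cases hj : j = k
    · subst hj; simp at this ⊢; omega
    · simpa [hj, Ne.symm hj] using this
  · rintro ⟨h0, H⟩ j
    have := H j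
    by_cases hj : j = k
    · subst hj; simp at this ⊢; omega
    · simpa [hj, Ne.symm hj] using this

lemma card_words {m : ℕ} (n : ℕ) (A : Fin n → Fin m → Bool) (r : Fin m → ℕ) :
    (Finset.univ.filter (fun π : Fin n → Fin m => (∀ i, A i (π i) = true) ∧
      ∀ k, (Finset.univ.filter (fun i => π i = k)).card = r k)).card = countWords n A r := by
  induction n generalizing r with
  | zero =>
    rw [Finset.card_filter]
    simp only [countWords, Finset.univ_unique, Finset.sum_singleton, IsEmpty.forall_iff,
      true_and, Finset.univ_eq_empty, Finset.filter_empty, Finset.card_empty]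
    simp only [eq_comm (a := 0)]
  | succ n ih =>
    rw [Finset.card_filter, ← (Fin.consEquiv (fun _ : Fin (n + 1) => Fin m)).sum_comp,
      Fintype.sum_prod_type, countWords]
    refine Finset.sum_congr rfl fun k _ => ?_
    rw [← ih, Finset.card_filter]
    simp only [Fin.consEquiv_apply, card_cons_eq_iff, Fin.forall_fin_succ, Fin.cons_zero,
      Fin.cons_succ]
    by_cases h : (A 0 k && decide (0 < r k)) = true
    · have h' : A 0 k = true ∧ 0 < r k := by simpa using h
      simp [h'.1, h'.2]
    · have h' : ¬ (A 0 k = true ∧ 0 < r k) := by simpa using h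
      rw [if_neg h]
      exact Finset.sum_eq_zero fun τ _ => if_neg fun H => h' ⟨H.1.1, H.2.1⟩

/-- The sum of the two truncated differences is the distance between the symbol `k` and `i / lam`,
written as explicit arithmetic that the kernel can evaluate. -/
lemma Vinf_eq_countWords (m lam d : ℕ) : Vinf m lam d = countWords (m := m) (m * lam)
    (fun i k => Nat.ble (k.val - i.val / lam + (i.val / lam - k.val)) d) (fun _ => lam) := by
  rw [← card_words, Vinf, ball, FPset, Finset.filter_filter]
  congr 1
  ext π
  simp only [Finset.mem_filter, Finset.mem_univ, true_and, isFreqPerm, cheb, ident,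
    Finset.sup_le_iff, forall_true_left, Nat.ble_eq, Nat.dist]
  exact and_comm

theorem Vinf_2_8_2 : Vinf 4 2 2 = 786 := by
  rw [Vinf_eq_countWords]
  decide +kernel
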